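/- arXiv:math/0104207 — 2 statements merged into one kernel-verified Lean document; each statement's English description precedes it below -/
import Mathlib

section
/- Let V be a finite-dimensional complex vector space of dimension d, let n ≥ 1, and let σ be a permutation of {1,…,n}. Let σ act linearly on the direct sum V^n of n copies of V by permuting the summands: σ(v₁,…,v_n) = (v_{σ(1)},…,v_{σ(n)}). Then the age of this linear automorphism equals d·(n − c(σ))/2, where c(σ) is the number of orbits of the cyclic group generated by σ on {1,…,n}. -/
/-- The unique representative `r ∈ [0,1)` with `z = exp(2 π i r)` (for `z` on the
unit circle), extracted from the argument of `z`. -/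
noncomputable def unitFrac (z : ℂ) : ℝ :=
  if 0 ≤ z.arg then z.arg / (2 * Real.pi) else z.arg / (2 * Real.pi) + 1

/-- The age of an endomorphism of a finite-dimensional complex vector space: the sum,
over the eigenvalues (roots of the characteristic polynomial, with multiplicity), of the
numbers `r ∈ [0,1)` with eigenvalue `exp(2 π i r)`. -/
noncomputable def age {V : Type*} [AddCommGroup V] [Module ℂ V] [FiniteDimensional ℂ V]
    (f : V →ₗ[ℂ] V) : ℝ :=
  (f.charpoly.roots.map unitFrac).sum

/-!
For an automorphism `g` of finite order, the eigenvalues of `g⁻¹` are the inverses of those of `g`.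
An eigenvalue `z ≠ 1` and its inverse together contribute `1` to `a(g) + a(g⁻¹)`, so this sum is
the codimension of the fixed space of `g`. A permutation is conjugate to its inverse, so its two
ages agree, and its fixed vectors in `V^n` are the `V`-valued functions on the set of its orbits.
-/

open Module Polynomial

theorem unitFrac_add_unitFrac_inv (z : ℂ) :
    unitFrac z + unitFrac z⁻¹ = if z.arg = 0 then 0 else 1 := by
  have hpi := Real.pi_pos
  unfold unitFrac
  rw [Complex.arg_inv]
  rcases lt_trichotomy z.arg 0 with hneg | hzero | hpos
  · rw [if_neg (by linarith : z.arg ≠ Real.pi), if_neg hneg.not_ge, if_pos (by linarith),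
      if_neg hneg.ne]
    ring
  · simp [hzero, hpi.ne]
  · rw [if_pos hpos.le, if_neg hpos.ne']
    by_cases hz : z.arg = Real.pi
    · rw [if_pos hz, if_pos hpi.le, hz]
      field_simp
      norm_num
    · rw [if_neg hz, if_neg (by linarith)]
      ring

theorem arg_eq_zero_iff_of_norm_eq_one {z : ℂ} (hz : ‖z‖ = 1) : z.arg = 0 ↔ z = 1 := by
  refine ⟨fun h => ?_, fun h => by rw [h, Complex.arg_one]⟩
  simpa [hz, h] using (Complex.norm_mul_exp_arg_mul_I z).symm

theorem unitFrac_add_unitFrac_inv_of_norm_eq_one {z : ℂ} (hz : ‖z‖ = 1) :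
    unitFrac z + unitFrac z⁻¹ = if z = 1 then 0 else 1 := by
  simp only [unitFrac_add_unitFrac_inv, arg_eq_zero_iff_of_norm_eq_one hz]

theorem sum_map_ite_eq_card_sub_count {α R : Type*} [DecidableEq α] [AddCommGroupWithOne R]
    (s : Multiset α) (a : α) :
    (s.map fun x => if x = a then (0 : R) else 1).sum = s.card - s.count a := by
  induction s using Multiset.induction_on with
  | empty => simp
  | cons x s ih =>
    rcases eq_or_ne x a with rfl | hx
    · simp [ih]
    · rw [Multiset.map_cons, Multiset.sum_cons, ih, if_neg hx, Multiset.card_cons,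
        Multiset.count_cons_of_ne hx.symm, Nat.cast_succ]
      abel

section Eigenvalues

theorem isOfFinOrder_of_hasEigenvalue {R M : Type*} [CommRing R] [IsDomain R] [AddCommGroup M]
    [Module R M] [IsTorsionFree R M] {f : End R M} (hf : IsOfFinOrder f) {μ : R}
    (hμ : f.HasEigenvalue μ) : IsOfFinOrder μ := by
  obtain ⟨n, hn, hfn⟩ := isOfFinOrder_iff_pow_eq_one.mp hf
  obtain ⟨v, hv⟩ := hμ.exists_hasEigenvector
  refine isOfFinOrder_iff_pow_eq_one.mpr ⟨n, hn, smul_left_injective R hv.2 ?_⟩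
  simp [← hv.pow_apply n, hfn]

variable {K V : Type*} [Field K] [AddCommGroup V] [Module K V]

theorem maxGenEigenspace_le_maxGenEigenspace_symm_inv (g : V ≃ₗ[K] V) (μ : K) :
    End.maxGenEigenspace (g : End K V) μ ≤ End.maxGenEigenspace (g.symm : End K V) μ⁻¹ := by
  obtain ⟨a, hcomm, ha⟩ : ∃ a : End K V, Commute a ((g : End K V) - μ • 1) ∧
      a * ((g : End K V) - μ • 1) = (g.symm : End K V) - μ⁻¹ • 1 := by
    rcases eq_or_ne μ 0 with rfl | hμ
    -- Here `μ⁻¹ = 0` by convention, and both generalized eigenspaces are trivial.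
    · exact ⟨g.symm * g.symm, by ext v; simp, by ext v; simp⟩
    · exact ⟨-(μ⁻¹ • (g.symm : End K V)), by ext v; simp, by ext v; simp [hμ, smul_sub]⟩
  intro v hv
  rw [End.mem_maxGenEigenspace] at hv ⊢
  obtain ⟨k, hk⟩ := hv
  exact ⟨k, by rw [← ha, hcomm.mul_pow, End.mul_apply, hk, map_zero]⟩

theorem maxGenEigenspace_symm_inv (g : V ≃ₗ[K] V) (μ : K) :
    End.maxGenEigenspace (g.symm : End K V) μ⁻¹ = End.maxGenEigenspace (g : End K V) μ := by
  refine le_antisymm ?_ (maxGenEigenspace_le_maxGenEigenspace_symm_inv g μ)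
  simpa only [LinearEquiv.symm_symm, inv_inv] using
    maxGenEigenspace_le_maxGenEigenspace_symm_inv g.symm μ⁻¹

theorem isSemisimple_of_isOfFinOrder [CharZero K] {f : End K V} (hf : IsOfFinOrder f) :
    f.IsSemisimple := by
  obtain ⟨n, hn, hfn⟩ := isOfFinOrder_iff_pow_eq_one.mp hf
  have hsep : (X ^ n - 1 : K[X]).Separable :=
    X_pow_sub_one_separable_iff.mpr (Nat.cast_ne_zero.mpr hn.ne')
  exact End.isSemisimple_of_squarefree_aeval_eq_zero hsep.squarefree (by simp [hfn])

variable [FiniteDimensional K V]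

theorem roots_charpoly_symm (g : V ≃ₗ[K] V) :
    (g.symm : End K V).charpoly.roots = (g : End K V).charpoly.roots.map (·⁻¹) := by
  classical
  ext μ
  rw [← inv_inv μ, Multiset.count_map_eq_count' _ _ inv_injective, count_roots, count_roots,
    ← LinearMap.finrank_maxGenEigenspace_eq, ← LinearMap.finrank_maxGenEigenspace_eq,
    maxGenEigenspace_symm_inv]

theorem count_roots_charpoly_of_isSemisimple [DecidableEq K] {f : End K V} (hf : f.IsSemisimple)
    (μ : K) : f.charpoly.roots.count μ = finrank K (f.eigenspace μ) := by
  rw [count_roots, ← LinearMap.finrank_maxGenEigenspace_eq,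
    hf.isFinitelySemisimple.maxGenEigenspace_eq_eigenspace]

end Eigenvalues

section Age

variable {V W : Type*} [AddCommGroup V] [Module ℂ V] [FiniteDimensional ℂ V]
  [AddCommGroup W] [Module ℂ W] [FiniteDimensional ℂ W]

theorem age_conj (e : V ≃ₗ[ℂ] W) (f : End ℂ V) : age (e.conj f) = age f := by
  rw [age, age, LinearEquiv.charpoly_conj]

theorem age_add_age_symm {g : V ≃ₗ[ℂ] V} (hg : IsOfFinOrder (g : End ℂ V)) :
    age (g : End ℂ V) + age (g.symm : End ℂ V) =
      finrank ℂ V - finrank ℂ (End.eigenspace (g : End ℂ V) 1) := by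
  have hnorm : ∀ z ∈ (g : End ℂ V).charpoly.roots, ‖z‖ = 1 := fun z hz =>
    (isOfFinOrder_of_hasEigenvalue hg <|
      (End.hasEigenvalue_iff_isRoot_charpoly _ z).mpr (isRoot_of_mem_roots hz)).norm_eq_one
  have hcard : (g : End ℂ V).charpoly.roots.card = finrank ℂ V := by
    rw [IsAlgClosed.card_roots_eq_natDegree, LinearMap.charpoly_natDegree]
  calc
    age (g : End ℂ V) + age (g.symm : End ℂ V)
      = ((g : End ℂ V).charpoly.roots.map fun z => unitFrac z + unitFrac z⁻¹).sum := by
        rw [age, age, roots_charpoly_symm, Multiset.map_map, Multiset.sum_map_add]; rfl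
    _ = ((g : End ℂ V).charpoly.roots.map fun z => if z = 1 then (0 : ℝ) else 1).sum := by
        rw [Multiset.map_congr rfl fun z hz =>
          unitFrac_add_unitFrac_inv_of_norm_eq_one (hnorm z hz)]
    _ = finrank ℂ V - finrank ℂ (End.eigenspace (g : End ℂ V) 1) := by
        rw [sum_map_ite_eq_card_sub_count, hcard,
          count_roots_charpoly_of_isSemisimple (isSemisimple_of_isOfFinOrder hg)]

end Age

section PermutationOfCoordinates

theorem funLeft_pow {R M ι : Type*} [Semiring R] [AddCommMonoid M] [Module R M] (f : ι → ι)
    (k : ℕ) : (LinearMap.funLeft R M f : End R (ι → M)) ^ k = LinearMap.funLeft R M f^[k] := by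
  induction k with
  | zero => rfl
  | succ k ih => rw [pow_succ', ih, Function.iterate_succ, LinearMap.funLeft_comp]; rfl

theorem isOfFinOrder_funLeft (R M : Type*) {ι : Type*} [Semiring R] [AddCommMonoid M] [Module R M]
    {σ : Equiv.Perm ι} (hσ : IsOfFinOrder σ) :
    IsOfFinOrder (LinearMap.funLeft R M σ : End R (ι → M)) := by
  obtain ⟨n, hn, hσn⟩ := isOfFinOrder_iff_pow_eq_one.mp hσ
  refine isOfFinOrder_iff_pow_eq_one.mpr ⟨n, hn, ?_⟩
  rw [funLeft_pow, ← Equiv.Perm.coe_pow, hσn]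
  rfl

theorem perm_isConj_inv {ι : Type*} [Finite ι] (σ : Equiv.Perm ι) : IsConj σ σ⁻¹ := by
  classical
  have := Fintype.ofFinite ι
  rw [Equiv.Perm.isConj_iff_cycleType_eq, Equiv.Perm.cycleType_inv]

theorem age_funLeft_eq_of_isConj {V ι : Type*} [AddCommGroup V] [Module ℂ V]
    [FiniteDimensional ℂ V] [Finite ι] {σ τ : Equiv.Perm ι} (h : IsConj σ τ) :
    age (LinearMap.funLeft ℂ V σ) = age (LinearMap.funLeft ℂ V τ) := by
  obtain ⟨c, rfl⟩ := isConj_iff.mp h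
  exact (age_conj (LinearEquiv.funCongrLeft ℂ V c.symm) (LinearMap.funLeft ℂ V σ)).symm

theorem mem_eigenspace_funLeft_one_iff {R M ι : Type*} [CommRing R] [AddCommGroup M] [Module R M]
    {f : ι → ι} {v : ι → M} :
    v ∈ End.eigenspace (LinearMap.funLeft R M f) 1 ↔ ∀ i, v (f i) = v i := by
  simp [funext_iff, LinearMap.funLeft_apply]

theorem apply_eq_of_mem_orbit_zpowers {α β : Type*} {σ : Equiv.Perm α} {v : α → β}
    (hv : ∀ i, v (σ i) = v i) {i j : α} (hij : i ∈ MulAction.orbit (Subgroup.zpowers σ) j) :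
    v i = v j := by
  obtain ⟨⟨τ, hτ⟩, rfl⟩ := hij
  obtain ⟨k, rfl⟩ := Subgroup.mem_zpowers_iff.mp hτ
  change v ((σ ^ k) j) = v j
  refine zpow_induction_left (P := fun τ : Equiv.Perm α => v (τ j) = v j) rfl
    (fun τ hτ => ?_) (fun τ hτ => ?_) k
  · rw [Equiv.Perm.mul_apply, hv, hτ]
  · rw [Equiv.Perm.mul_apply, ← hv, ← Equiv.Perm.mul_apply, mul_inv_cancel,
      Equiv.Perm.one_apply, hτ]

/-- The fixed vectors of a permutation of coordinates are the functions on its orbits. -/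
def eigenspaceFunLeftOneEquiv (R M : Type*) {ι : Type*} [CommRing R] [AddCommGroup M] [Module R M]
    (σ : Equiv.Perm ι) :
    End.eigenspace (LinearMap.funLeft R M σ) 1 ≃ₗ[R]
      (MulAction.orbitRel.Quotient (Subgroup.zpowers σ) ι → M) where
  toFun v := Quotient.lift v.1 fun _ _ =>
    apply_eq_of_mem_orbit_zpowers (mem_eigenspace_funLeft_one_iff.mp v.2)
  invFun w := ⟨fun i => w (Quotient.mk _ i), mem_eigenspace_funLeft_one_iff.mpr fun _ =>
    congrArg w (Quotient.sound ⟨⟨σ, Subgroup.mem_zpowers σ⟩, rfl⟩)⟩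
  map_add' v w := by ext ⟨i⟩; rfl
  map_smul' c v := by ext ⟨i⟩; rfl
  left_inv v := rfl
  right_inv w := by ext ⟨i⟩; rfl

theorem finrank_fun_eq_card_mul {R M ι : Type*} [Semiring R] [StrongRankCondition R]
    [AddCommMonoid M] [Module R M] [Module.Free R M] [Module.Finite R M] [Finite ι] :
    finrank R (ι → M) = Nat.card ι * finrank R M := by
  have := Fintype.ofFinite ι
  rw [finrank_pi_fintype, Finset.sum_const, Finset.card_univ, Nat.card_eq_fintype_card,
    smul_eq_mul]

theorem finrank_eigenspace_funLeft_one {R M ι : Type*} [CommRing R] [Nontrivial R]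
    [AddCommGroup M] [Module R M] [Module.Free R M] [Module.Finite R M] [Finite ι]
    (σ : Equiv.Perm ι) :
    finrank R (End.eigenspace (LinearMap.funLeft R M σ) 1) =
      Nat.card (MulAction.orbitRel.Quotient (Subgroup.zpowers σ) ι) * finrank R M := by
  rw [(eigenspaceFunLeftOneEquiv R M σ).finrank_eq, finrank_fun_eq_card_mul]

end PermutationOfCoordinates

theorem age_perm_general {V ι : Type*} [AddCommGroup V] [Module ℂ V] [FiniteDimensional ℂ V]
    [Finite ι] (σ : Equiv.Perm ι) :
    age (LinearMap.funLeft ℂ V σ) =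
      (finrank ℂ V : ℝ) *
        ((Nat.card ι : ℝ) -
          (Nat.card (MulAction.orbitRel.Quotient (Subgroup.zpowers σ) ι) : ℝ)) / 2 := by
  have hsum : age (LinearMap.funLeft ℂ V σ) + age (LinearMap.funLeft ℂ V ⇑σ⁻¹) =
      finrank ℂ (ι → V) - finrank ℂ (End.eigenspace (LinearMap.funLeft ℂ V σ) 1) :=
    age_add_age_symm (g := LinearEquiv.funCongrLeft ℂ V σ)
      (isOfFinOrder_funLeft ℂ V (isOfFinOrder_of_finite σ))
  have hinv : age (LinearMap.funLeft ℂ V σ) = age (LinearMap.funLeft ℂ V ⇑σ⁻¹) :=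
    age_funLeft_eq_of_isConj (perm_isConj_inv σ)
  rw [← hinv, finrank_eigenspace_funLeft_one, finrank_fun_eq_card_mul] at hsum
  push_cast at hsum
  linarith

/-- The age of the permutation automorphism `σ : V^n → V^n`, `(σ v)_i = v_{σ(i)}`, is
`d (n - c(σ))/2` where `d = dim V` and `c(σ)` is the number of orbits of `⟨σ⟩` on
`{1,…,n}`. -/
theorem age_perm {V : Type*} [AddCommGroup V] [Module ℂ V] [FiniteDimensional ℂ V]
    (n : ℕ) (hn : 1 ≤ n) (σ : Equiv.Perm (Fin n)) :
    age (LinearMap.funLeft ℂ V σ) =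
      (Module.finrank ℂ V : ℝ) *
        ((n : ℝ) -
          (Nat.card (MulAction.orbitRel.Quotient (Subgroup.zpowers σ) (Fin n)) : ℝ)) / 2 := by
  rw [age_perm_general, Nat.card_fin]
end

section
/- For all permutations g, h ∈ 𝔖_n one has |O(g)| + |O(h)| + |O(gh)| ≤ n + 2·|O(⟨g,h⟩)|, where |O(σ)| is the number of orbits of the cyclic group generated by σ on {1,…,n} and |O(⟨g,h⟩)| is the number of orbits of the subgroup generated by g and h on {1,…,n}. -/
/-!
Let `g` and `h` act on the space `V` of functions `α → ℚ` by permuting coordinates. The number of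
orbits of a subgroup on `α` is both the dimension of its invariants and that of its coinvariants, so
the theorem is Scott's inequality
`dim V^g + dim V^h + dim V^{gh} ≤ dim V + dim (V^g ∩ V^h) + dim V / (im (g - 1) + im (h - 1))`,
which holds for any two endomorphisms `g` and `h` of a finite-dimensional space `V`. Indeed, since
`gh - 1 = (g - 1)h + (h - 1)`, the operator `h - 1` maps `V^{gh}` into the intersection of the
images of `g - 1` and `h - 1`, with kernel `V^g ∩ V^h`; rank-nullity does the rest.
-/

/-- The number of orbits of a subgroup `H` of `𝔖_n` acting on `{1,…,n}`. -/
noncomputable def numOrbits {n : ℕ} (H : Subgroup (Equiv.Perm (Fin n))) : ℕ :=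
  Nat.card (MulAction.orbitRel.Quotient H (Fin n))

open LinearMap (ker range funLeft)
open Module (End finrank)
open MulAction (orbitRel)
open Subgroup (closure zpowers)

section Scott

theorem mul_sub_one_eq_sub_one_mul_add {A : Type*} [Ring A] (a b : A) :
    a * b - 1 = (a - 1) * b + (b - 1) := by
  noncomm_ring

section Ring

variable {R M : Type*} [Ring R] [AddCommGroup M] [Module R M]

theorem ker_mul_sub_one_inf_ker_sub_one (g h : End R M) :
    ker (g * h - 1) ⊓ ker (h - 1) = ker (g - 1) ⊓ ker (h - 1) := by
  ext v
  simp only [Submodule.mem_inf, LinearMap.mem_ker, and_congr_left_iff]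
  intro hv
  have hfix : h v = v := sub_eq_zero.mp hv
  rw [mul_sub_one_eq_sub_one_mul_add, LinearMap.add_apply, End.mul_apply, hv, hfix, add_zero]

theorem map_sub_one_ker_mul_sub_one_le (g h : End R M) :
    (ker (g * h - 1)).map (h - 1) ≤ range (g - 1) ⊓ range (h - 1) := by
  rintro _ ⟨v, hv, rfl⟩
  rw [SetLike.mem_coe, LinearMap.mem_ker, mul_sub_one_eq_sub_one_mul_add] at hv
  refine ⟨?_, LinearMap.mem_range_self _ v⟩
  rw [eq_neg_of_add_eq_zero_right hv]
  exact neg_mem (LinearMap.mem_range_self _ (h v))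

end Ring

variable {K V W : Type*} [DivisionRing K] [AddCommGroup V] [Module K V]
  [AddCommGroup W] [Module K W]

theorem finrank_map_add_finrank_inf_ker (f : V →ₗ[K] W) (p : Submodule K V)
    [FiniteDimensional K p] :
    finrank K (p.map f) + finrank K ↥(p ⊓ ker f) = finrank K p := by
  rw [← (f.domRestrict p).finrank_range_add_finrank_ker, LinearMap.range_domRestrict,
    LinearMap.ker_domRestrict, ← p.map_comap_subtype,
    (Submodule.equivSubtypeMap p ((ker f).comap p.subtype)).symm.finrank_eq]

variable [FiniteDimensional K V]

theorem finrank_ker_mul_sub_one_le (g h : End K V) :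
    finrank K (ker (g * h - 1)) ≤
      finrank K ↥(range (g - 1) ⊓ range (h - 1)) + finrank K ↥(ker (g - 1) ⊓ ker (h - 1)) := by
  rw [← finrank_map_add_finrank_inf_ker (h - 1), ker_mul_sub_one_inf_ker_sub_one]
  gcongr
  exact Submodule.finrank_mono (map_sub_one_ker_mul_sub_one_le g h)

theorem finrank_ker_sub_one_add_le (g h : End K V) :
    finrank K (ker (g - 1)) + finrank K (ker (h - 1)) + finrank K (ker (g * h - 1)) ≤
      finrank K V + finrank K ↥(ker (g - 1) ⊓ ker (h - 1)) +
        finrank K (V ⧸ range (g - 1) ⊔ range (h - 1)) := by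
  have hgh := finrank_ker_mul_sub_one_le g h
  have hg := (g - 1).finrank_range_add_finrank_ker
  have hh := (h - 1).finrank_range_add_finrank_ker
  have hinf := Submodule.finrank_sup_add_finrank_inf_eq (range (g - 1)) (range (h - 1))
  have hsup := (range (g - 1) ⊔ range (h - 1)).finrank_quotient_add_finrank
  lia

end Scott

section Orbits

variable {G α : Type*} [Group G] [MulAction G α]

theorem orbitRel_closure_le_iff {S : Set G} {r : Setoid α} :
    orbitRel (closure S) α ≤ r ↔ ∀ g ∈ S, ∀ a, r (g • a) a := by
  refine ⟨fun hr g hg a ↦ hr ⟨⟨g, Subgroup.subset_closure hg⟩, rfl⟩, ?_⟩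
  rintro hr _ a ⟨⟨k, hk⟩, rfl⟩
  change r (k • a) a
  induction hk using Subgroup.closure_induction generalizing a with
  | mem g hg => exact hr g hg a
  | one => simp
  | mul g h _ _ hg hh => simpa [mul_smul] using r.trans (hg (a := h • a)) (hh (a := a))
  | inv g _ hg => simpa using r.symm (hg (a := g⁻¹ • a))

variable (R : Type*) [Ring R]

variable (α) in
/-- The operator on functions `α → R` that precomposes with the action of `g`, i.e. the permutation
representation as a right action: see `smulPullback_mul` for the order of products. -/
def smulPullback (g : G) : End R (α → R) :=
  funLeft R R (g • ·)

theorem smulPullback_apply (g : G) (f : α → R) (a : α) :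
    smulPullback α R g f a = f (g • a) :=
  rfl

theorem smulPullback_mul (g h : G) :
    smulPullback α R (g * h) = smulPullback α R h * smulPullback α R g := by
  ext f a
  simp [smulPullback_apply, mul_smul]

theorem smulPullback_single [DecidableEq α] (g : G) (a : α) (x : R) :
    smulPullback α R g (Pi.single (g • a) x) = Pi.single a x := by
  ext b
  simp [smulPullback_apply, Pi.single_apply]

theorem iInf_ker_smulPullback_sub_one (S : Set G) :
    ⨅ g ∈ S, ker (smulPullback α R g - 1) =
      range (funLeft R R (Quotient.mk (orbitRel (closure S) α))) := by
  ext f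
  have hker : f ∈ ⨅ g ∈ S, ker (smulPullback α R g - 1) ↔
      orbitRel (closure S) α ≤ Setoid.ker f := by
    simp [orbitRel_closure_le_iff, Setoid.ker_def, funext_iff, sub_eq_zero, smulPullback_apply]
  rw [hker]
  constructor
  · exact fun hf ↦ ⟨Quotient.lift f fun _ _ hab ↦ hf hab, rfl⟩
  · rintro ⟨f, rfl⟩ a b hab
    exact congrArg f (Quotient.sound hab)

variable [Finite α] [StrongRankCondition R]

theorem finrank_iInf_ker_smulPullback_sub_one (S : Set G) :
    finrank R ↥(⨅ g ∈ S, ker (smulPullback α R g - 1)) =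
      Nat.card (orbitRel.Quotient (closure S) α) := by
  have := Fintype.ofFinite (orbitRel.Quotient (closure S) α)
  rw [iInf_ker_smulPullback_sub_one, LinearMap.finrank_range_of_inj
    (LinearMap.funLeft_injective_of_surjective R R _ Quotient.mk_surjective),
    Nat.card_eq_fintype_card]
  exact Module.finrank_fintype_fun_eq_card R

theorem finrank_ker_smulPullback_sub_one (g : G) :
    finrank R (ker (smulPullback α R g - 1)) =
      Nat.card (orbitRel.Quotient (zpowers g) α) := by
  rw [Subgroup.zpowers_eq_closure, ← finrank_iInf_ker_smulPullback_sub_one R, iInf_singleton]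

theorem finrank_quotient_iSup_range_smulPullback_sub_one_le (S : Set G) :
    finrank R ((α → R) ⧸ ⨆ g ∈ S, range (smulPullback α R g - 1)) ≤
      Nat.card (orbitRel.Quotient (closure S) α) := by
  classical
  have := Fintype.ofFinite α
  have := Fintype.ofFinite (orbitRel.Quotient (closure S) α)
  set p := ⨆ g ∈ S, range (smulPullback α R g - 1)
  -- Basis vectors of two points of one orbit agree modulo `p`, so one vector per orbit spans.
  let e (a : α) : (α → R) ⧸ p := p.mkQ (Pi.single a 1)
  have he : orbitRel (closure S) α ≤ Setoid.ker e := by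
    refine orbitRel_closure_le_iff.mpr fun g hg a ↦ Eq.symm ((Submodule.Quotient.eq p).mpr ?_)
    refine Submodule.mem_iSup_of_mem g (Submodule.mem_iSup_of_mem hg ⟨Pi.single (g • a) 1, ?_⟩)
    simp [smulPullback_single]
  have he_basis : e = p.mkQ ∘ Pi.basisFun R α := by
    ext a
    simp [e]
  have hspan : Submodule.span R (Set.range (Quotient.lift e fun _ _ hab ↦ he hab)) = ⊤ := by
    rw [Set.range_quotient_lift (s := orbitRel (closure S) α), he_basis, Set.range_comp,
      Submodule.span_image, (Pi.basisFun R α).span_eq, Submodule.map_top, p.range_mkQ]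
  rw [← finrank_top, ← hspan, Nat.card_eq_fintype_card]
  exact finrank_range_le_card _

theorem orbit_count_inequality_general (g h : G) :
    Nat.card (orbitRel.Quotient (zpowers g) α) + Nat.card (orbitRel.Quotient (zpowers h) α) +
        Nat.card (orbitRel.Quotient (zpowers (g * h)) α) ≤
      Nat.card α + 2 * Nat.card (orbitRel.Quotient (closure {g, h}) α) := by
  have := Fintype.ofFinite α
  have hscott := finrank_ker_sub_one_add_le (smulPullback α ℚ h) (smulPullback α ℚ g)
  have hinv := finrank_iInf_ker_smulPullback_sub_one (α := α) ℚ {h, g}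
  have hcoinv := finrank_quotient_iSup_range_smulPullback_sub_one_le (α := α) ℚ {h, g}
  rw [iInf_pair] at hinv
  rw [iSup_pair] at hcoinv
  rw [← smulPullback_mul, hinv, Module.finrank_fintype_fun_eq_card,
    ← Nat.card_eq_fintype_card] at hscott
  simp only [finrank_ker_smulPullback_sub_one] at hscott
  rw [Set.pair_comm g h]
  lia

end Orbits

/-- For `g, h ∈ 𝔖_n` one has `|O(g)| + |O(h)| + |O(gh)| ≤ n + 2 |O(⟨g,h⟩)|`. -/
theorem orbit_count_inequality {n : ℕ} (g h : Equiv.Perm (Fin n)) :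
    numOrbits (Subgroup.zpowers g) + numOrbits (Subgroup.zpowers h)
        + numOrbits (Subgroup.zpowers (g * h))
      ≤ n + 2 * numOrbits (Subgroup.closure {g, h}) := by
  simpa [numOrbits] using orbit_count_inequality_general (α := Fin n) g h
end
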